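/- arXiv:2209.12506 — 8 statements merged into one kernel-verified Lean document; each statement's English description precedes it below -/
import Mathlib

section
/- Let V be a finite set and let C be an abstract simplicial complex on V. Then there exists a family Q of pairs (S,k) with S ⊆ V and k ∈ ℕ such that C = C_Q. In particular, one may take Q = {(A, v_A) : A ⊆ V}, where v_A = max{|B| : B ⊆ A, B ∈ C}. -/
/-!
If `U ∈ C` then, for every `A`, the set `A ∩ U` is a face of `C` contained in `A`, so its size is at
most `v_A`. Conversely, apply the constraint with `A = U`: it says `|U| ≤ v_U`. Since `v_U` is
attained by some face `B ⊆ U`, this forces `B = U`, hence `U ∈ C`.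
-/

/-- A constraint set `C` on the vertex set `V` is an abstract simplicial complex (ASC)
if `∅ ∈ C` and `C` is downward closed. -/
def isASC {V : Type*} (C : Finset V → Prop) : Prop :=
  C ∅ ∧ ∀ A B : Finset V, C A → B ⊆ A → C B

/-- The constraint set `C_Q` associated to a family `Q` of pairs `(S, k)`:
`U ∈ C_Q` iff for all `(S,k) ∈ Q`, `|S ∩ U| ≤ k`. -/
def CQ {V : Type*} [DecidableEq V] (Q : Set (Finset V × ℕ)) (U : Finset V) : Prop :=
  ∀ p ∈ Q, (p.1 ∩ U).card ≤ p.2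

/-- Every abstract simplicial complex `C` on a finite set `V` can be written as `C_Q`
for some family `Q` of pairs `(S,k)`; in particular one may take
`Q = {(A, v_A) : A ⊆ V}` where `v_A = max {|B| : B ⊆ A, B ∈ C}`. -/
theorem stmt1 {V : Type*} [Fintype V] [DecidableEq V] (C : Finset V → Prop)
    (hC : isASC C) :
    (∃ Q : Set (Finset V × ℕ), ∀ U : Finset V, C U ↔ CQ Q U) ∧
    (∀ U : Finset V, C U ↔
      CQ {p : Finset V × ℕ | ∃ A : Finset V,
        p = (A, sSup {m : ℕ | ∃ B ⊆ A, C B ∧ m = B.card})} U) := by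
  -- The supremum in `ℕ` is a genuine maximum: the set is bounded by `|A|` and contains `|∅|`.
  have bdd : ∀ A : Finset V, BddAbove {m : ℕ | ∃ B ⊆ A, C B ∧ m = B.card} := by
    rintro A
    refine ⟨A.card, ?_⟩
    rintro m ⟨B, hBA, -, rfl⟩
    exact Finset.card_le_card hBA
  have key : ∀ U : Finset V, C U ↔
      CQ {p : Finset V × ℕ | ∃ A : Finset V,
        p = (A, sSup {m : ℕ | ∃ B ⊆ A, C B ∧ m = B.card})} U := by
    intro U
    constructor
    · rintro hU _ ⟨A, rfl⟩
      exact le_csSup (bdd A)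
        ⟨A ∩ U, Finset.inter_subset_left, hC.2 U _ hU Finset.inter_subset_right, rfl⟩
    · intro h
      have hle := h _ ⟨U, rfl⟩
      obtain ⟨B, hBU, hB, hcard⟩ := Nat.sSup_mem
        (s := {m : ℕ | ∃ B ⊆ U, C B ∧ m = B.card})
        ⟨0, ∅, Finset.empty_subset U, hC.1, Finset.card_empty.symm⟩ (bdd U)
      simp only [Finset.inter_self] at hle
      rw [hcard] at hle
      rwa [← Finset.eq_of_subset_of_card_le hBU hle]
  exact ⟨⟨_, key⟩, key⟩
end

section
/- Let S be a finite set, w : S → ℕ a vector of positive integer weights, and k ∈ ℕ. For every set U, the knapsack inequality ∑_{i ∈ S ∩ U} w_i ≤ k holds if and only if every cover inequality holds, i.e., for every C ⊆ S with ∑_{i ∈ C} w_i > k one has |C ∩ U| ≤ |C| − 1. Consequently, a constraint set defined by a family of weighted knapsack constraints (triples (S,k,w)) coincides with the constraint set C_Q defined by the family Q of pairs (C, |C|−1) over all covers C of the knapsack constraints. -/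
/-- The constraint set associated to a family `Q'` of weighted knapsack triples `(S, k, w)`:
`U` is feasible iff for every `(S,k,w) ∈ Q'`, `∑_{i ∈ S ∩ U} w i ≤ k`. -/
def CQ' {V : Type*} [DecidableEq V] (Q' : Set (Finset V × ℕ × (V → ℕ)))
    (U : Finset V) : Prop :=
  ∀ t ∈ Q', (∑ i ∈ t.1 ∩ U, t.2.2 i) ≤ t.2.1

/-- The family of cover-inequality pairs associated to a family of knapsack triples:
for every `(S,k,w) ∈ Q'` and every cover `C ⊆ S` (i.e. `∑_{i ∈ C} w i > k`), the
pair `(C, |C| - 1)`. -/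
def coverPairs {V : Type*} [DecidableEq V] (Q' : Set (Finset V × ℕ × (V → ℕ))) :
    Set (Finset V × ℕ) :=
  {p | ∃ t ∈ Q', p.1 ⊆ t.1 ∧ t.2.1 < ∑ i ∈ p.1, t.2.2 i ∧ p.2 = p.1.card - 1}

theorem knapsack_iff_cover {V : Type*} [DecidableEq V] (S : Finset V) (w : V → ℕ) (k : ℕ)
    (U : Finset V) :
    (∑ i ∈ S ∩ U, w i) ≤ k ↔
      ∀ Cov ⊆ S, k < (∑ i ∈ Cov, w i) → (Cov ∩ U).card ≤ Cov.card - 1 := by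
  constructor
  · intro h Cov hS hk
    have hnot : ¬ Cov ⊆ U := fun hU =>
      absurd (Finset.sum_le_sum_of_subset (f := w) (Finset.subset_inter hS hU)) (by omega)
    have hlt : (Cov ∩ U).card < Cov.card :=
      Finset.card_lt_card
        ⟨Finset.inter_subset_left, fun h' => hnot (h'.trans Finset.inter_subset_right)⟩
    omega
  · intro h
    by_contra! hk
    have hcard := h (S ∩ U) Finset.inter_subset_left hk
    rw [Finset.inter_assoc, Finset.inter_self] at hcard
    -- A cover has weight above `k ≥ 0`, so it is nonempty and the subtraction `|C| - 1` is genuine.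
    have hpos : 0 < (S ∩ U).card :=
      Finset.card_pos.2 (Finset.nonempty_of_sum_ne_zero (f := w) (by omega))
    omega

/-- A knapsack constraint is equivalent to the collection of all its cover inequalities;
consequently, a constraint set defined by a family of weighted knapsack constraints
coincides with the constraint set `C_Q` given by the family of all cover-inequality
pairs `(C, |C| - 1)`. -/
theorem stmt2 {V : Type*} [DecidableEq V] :
    (∀ (S : Finset V) (w : V → ℕ), (∀ i ∈ S, 0 < w i) → ∀ (k : ℕ) (U : Finset V),
      ((∑ i ∈ S ∩ U, w i) ≤ k ↔
        ∀ Cov ⊆ S, k < (∑ i ∈ Cov, w i) → (Cov ∩ U).card ≤ Cov.card - 1)) ∧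
    (∀ Q' : Set (Finset V × ℕ × (V → ℕ)),
      (∀ t ∈ Q', ∀ i ∈ t.1, 0 < t.2.2 i) →
      ∀ U : Finset V, CQ' Q' U ↔ CQ (coverPairs Q') U) := by
  refine ⟨fun S w _ k U => knapsack_iff_cover S w k U, fun Q' _ U => ⟨?_, ?_⟩⟩
  · rintro h ⟨C, m⟩ ⟨t, ht, hC, hk, hm⟩
    exact hm ▸ (knapsack_iff_cover _ _ _ U).1 (h t ht) C hC hk
  · intro h t ht
    exact (knapsack_iff_cover _ _ _ U).2 fun C hC hk => h (C, C.card - 1) ⟨t, ht, hC, hk, rfl⟩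
end

section
/- Let G = (V,E) be a strongly connected directed graph, C an abstract simplicial complex on V, W ⊆ V with W ∈ C, and w ∈ W. Then every edge of the contracted reduced graph G_W / w is an edge of the reduced graph G_{W ∖ {w}}; that is, G_{W ∖ {w}} ⊇ G_W / w as graphs on the vertex set W ∖ {w}. -/
/-- `pathIn E T u v` : there is a directed path from `u` to `v` (in the graph with edge
relation `E`) all of whose vertices lie in the set `T`. -/
def pathIn {V : Type*} (E : V → V → Prop) (T : Set V) : V → V → Prop :=
  Relation.ReflTransGen (fun a b => E a b ∧ a ∈ T ∧ b ∈ T)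

/-- The edge relation of the reduced graph `G_W`: for distinct `v1, v2 ∈ W`, there is an
edge `(v1, v2)` iff there is a directed path in `G` from `v1` to `v2` all of whose
vertices lie in `{v1, v2} ∪ ((V ∖ W) ∩ V^C_{W ∖ {v1,v2}})`, where
`V^C_Z = {x : Z ∪ {x} ∈ C}`. -/
def redEdge {V : Type*} [DecidableEq V] (E : V → V → Prop) (C : Finset V → Prop)
    (W : Finset V) (v1 v2 : V) : Prop :=
  v1 ∈ W ∧ v2 ∈ W ∧ v1 ≠ v2 ∧
    pathIn E (({v1, v2} : Set V) ∪
      {x : V | x ∉ W ∧ C (insert x ((W.erase v1).erase v2))}) v1 v2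

/-- `W` is independent on `(G, C)` iff `W = ∅`, or `W ∈ C` and the reduced graph `G_W`
is strongly connected. -/
def independentOn {V : Type*} [DecidableEq V] (E : V → V → Prop) (C : Finset V → Prop)
    (W : Finset V) : Prop :=
  W = ∅ ∨ (C W ∧ ∀ u ∈ W, ∀ v ∈ W, Relation.ReflTransGen (redEdge E C W) u v)

/-- The edge relation of the contraction `G/v` of a directed graph at vertex `v`. -/
def contractEdge {V : Type*} (E : V → V → Prop) (v : V) (u w : V) : Prop :=
  u ≠ v ∧ w ≠ v ∧ (E u w ∨ (u ≠ w ∧ E u v ∧ E v w))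

theorem pathIn_mono {V : Type*} {E : V → V → Prop} {S T : Set V} (h : S ⊆ T) {a b : V}
    (hp : pathIn E S a b) : pathIn E T a b :=
  Relation.ReflTransGen.mono (fun _ _ hxy => ⟨hxy.1, h hxy.2.1, h hxy.2.2⟩) _ _ hp

/-- If `a` and `b` are among `u, v, w`, every vertex allowed on paths for `(a, b)` in the reduced
graph `G_W` is allowed on paths for `(u, v)` in the reduced graph `G_{W ∖ {w}}`. -/
theorem allowed_subset {V : Type*} [DecidableEq V] {C : Finset V → Prop} (hC : isASC C)
    {W : Finset V} (hW : C W) {w : V} (hw : w ∈ W) {u v a b : V}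
    (ha : a = u ∨ a = v ∨ a = w) (hb : b = u ∨ b = v ∨ b = w) :
    (({a, b} : Set V) ∪ {x : V | x ∉ W ∧ C (insert x ((W.erase a).erase b))}) ⊆
      ({u, v} : Set V) ∪
        {x : V | x ∉ W.erase w ∧ C (insert x (((W.erase w).erase u).erase v))} := by
  have hwT : w ∉ W.erase w ∧ C (insert w (((W.erase w).erase u).erase v)) := by
    refine ⟨by simp, hC.2 W _ hW ?_⟩
    intro y hy
    simp only [Finset.mem_insert, Finset.mem_erase] at hy
    rcases hy with rfl | hy
    · exact hw
    · exact hy.2.2.2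
  have key : ∀ c, c = u ∨ c = v ∨ c = w → c ∈ ({u, v} : Set V) ∪
      {x : V | x ∉ W.erase w ∧ C (insert x (((W.erase w).erase u).erase v))} := by
    rintro c (rfl | rfl | rfl)
    · exact Or.inl (by simp)
    · exact Or.inl (by simp)
    · exact Or.inr hwT
  rintro x ((rfl | rfl) | ⟨hxW, hxC⟩)
  · exact key _ ha
  · exact key _ hb
  · refine Or.inr ⟨fun h => hxW (Finset.mem_of_mem_erase h), hC.2 _ _ hxC ?_⟩
    intro y hy
    simp only [Finset.mem_insert, Finset.mem_erase] at hy ⊢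
    grind

/-- Let `G = (V,E)` be a strongly connected digraph, `C` an ASC on `V`, `W ∈ C` and
`w ∈ W`. Then every edge of the contracted reduced graph `G_W / w` is an edge of the
reduced graph `G_{W ∖ {w}}`. -/
theorem stmt5 {V : Type*} [Fintype V] [DecidableEq V] (E : V → V → Prop)
    (hirr : ∀ x, ¬ E x x) (hsc : ∀ u v : V, Relation.ReflTransGen E u v)
    (C : Finset V → Prop) (hC : isASC C) (W : Finset V) (hW : C W)
    (w : V) (hw : w ∈ W) :
    ∀ u v : V, contractEdge (redEdge E C W) w u v → redEdge E C (W.erase w) u v := by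
  rintro u v ⟨huw, hvw, ⟨hu, hv, huv, hp⟩ | ⟨huv, ⟨hu, -, -, hp⟩, ⟨-, hv, -, hq⟩⟩⟩
  · exact ⟨Finset.mem_erase.2 ⟨huw, hu⟩, Finset.mem_erase.2 ⟨hvw, hv⟩, huv,
      pathIn_mono (allowed_subset hC hW hw (by simp) (by simp)) hp⟩
  · exact ⟨Finset.mem_erase.2 ⟨huw, hu⟩, Finset.mem_erase.2 ⟨hvw, hv⟩, huv,
      Relation.ReflTransGen.trans
        (pathIn_mono (allowed_subset hC hW hw (by simp) (by simp)) hp)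
        (pathIn_mono (allowed_subset hC hW hw (by simp) (by simp)) hq)⟩
end

section
/- Let G = (V,E) be a strongly connected directed graph, C an abstract simplicial complex on V, P a finite set of pebbles, and W ⊆ V independent on (G,C). Let (u,v) be an edge of the reduced graph G_W, and let A : P → V be an injective configuration with A(P) ⊆ W, u ∈ A(P) and v ∉ A(P). Then there exists a directed path p in G from u to v such that for every prefix s of the corresponding plan (the sequence of edges along p), ρ(A, s) is defined and ρ(A, s)(P) ∈ C. Such a path is called a lift of the edge (u,v). -/
/-- The set of vertices occupied by the pebbles in configuration `A : P → V`. -/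
def occupied {V P : Type*} [DecidableEq V] [Fintype P] (A : P → V) : Finset V :=
  Finset.image A Finset.univ

/-- The configuration obtained from `A` by moving the pebble at `e.1` to `e.2`. -/
def movePeb {V P : Type*} [DecidableEq V] (A : P → V) (e : V × V) : P → V :=
  fun q => if A q = e.1 then e.2 else A q

/-- The transition `ρ(A, e)` along the edge `e = (u, v)` is defined iff `(u,v)` is an
edge of the graph, `u` is occupied and `v` is unoccupied. -/
def stepOK {V P : Type*} [DecidableEq V] [Fintype P] (E : V → V → Prop) (A : P → V)
    (e : V × V) : Prop :=
  E e.1 e.2 ∧ e.1 ∈ occupied A ∧ e.2 ∉ occupied A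

/-- The configuration obtained by executing a plan (a finite sequence of edges)
step by step from `A`. -/
def execPlan {V P : Type*} [DecidableEq V] (A : P → V) : List (V × V) → (P → V)
  | [] => A
  | e :: f => execPlan (movePeb A e) f

/-- `ρ(A, f)` is defined: every step of the plan `f` is defined. -/
def planOK {V P : Type*} [DecidableEq V] [Fintype P] (E : V → V → Prop) :
    (P → V) → List (V × V) → Prop
  | _, [] => True
  | A, e :: f => stepOK E A e ∧ planOK E (movePeb A e) f

/-- `(f, A)` is consistent with the constraint set `C`: for every prefix `s` of `f`,
`ρ(A, s)` is defined and the set of occupied vertices of `ρ(A, s)` belongs to `C`. -/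
def consistent {V P : Type*} [DecidableEq V] [Fintype P] (E : V → V → Prop)
    (C : Finset V → Prop) : (P → V) → List (V × V) → Prop
  | A, [] => C (occupied A)
  | A, e :: f => C (occupied A) ∧ stepOK E A e ∧ consistent E C (movePeb A e) f

/-- The list of consecutive edges of a list of vertices. -/
def edgesOf {V : Type*} : List V → List (V × V)
  | a :: b :: l => (a, b) :: edgesOf (b :: l)
  | _ => []

/-- `q` is the edge sequence of a directed path in `G` from `u` to `v`. -/
def isPathList {V : Type*} (E : V → V → Prop) (u v : V) (q : List (V × V)) : Prop :=
  ∃ l : List V, List.Chain E u l ∧ (u :: l).getLast (List.cons_ne_nil u l) = v ∧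
    q = edgesOf (u :: l)

/-- A move vacates `x` and fills `y`: `movePeb` moves every pebble located at `x`. -/
theorem occupied_movePeb {V P : Type*} [DecidableEq V] [Fintype P]
    (B : P → V) {x y : V} {R : Finset V} (hB : occupied B = insert x R) (hxR : x ∉ R) :
    occupied (movePeb B (x, y)) = insert y R := by
  have hmem : ∀ z, (∃ q, B q = z) ↔ z = x ∨ z ∈ R := fun z => by
    have h := Finset.ext_iff.mp hB z
    simpa [occupied] using h
  ext z
  simp only [occupied, movePeb, Finset.mem_image, Finset.mem_univ, true_and, Finset.mem_insert]
  constructor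
  · rintro ⟨q, hq⟩
    split_ifs at hq with h
    · exact Or.inl hq.symm
    · rcases (hmem z).mp ⟨q, hq⟩ with h' | h'
      · exact absurd (hq.trans h') h
      · exact Or.inr h'
  · rintro (rfl | hz)
    · obtain ⟨q, hq⟩ := (hmem x).mpr (Or.inl rfl)
      exact ⟨q, if_pos hq⟩
    · obtain ⟨q, hq⟩ := (hmem z).mpr (Or.inr hz)
      refine ⟨q, ?_⟩
      rw [if_neg, hq]
      rintro h
      exact hxR (h ▸ hq ▸ hz)

/-- A pebble can be moved along any walk in `T` when the remaining pebbles occupy a set `R`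
disjoint from `T` and every `{x} ∪ R` with `x ∈ T` satisfies the constraints. -/
theorem exists_plan_of_pathIn {V P : Type*} [DecidableEq V] [Fintype P]
    {E : V → V → Prop} (hirr : ∀ x, ¬ E x x) {C : Finset V → Prop} {T : Set V} {R : Finset V}
    (hTR : ∀ x ∈ T, x ∉ R) (hCT : ∀ x ∈ T, C (insert x R)) {u v : V} (hv : v ∈ T)
    (h : pathIn E T u v) :
    ∀ B : P → V, occupied B = insert u R →
      ∃ q : List (V × V), isPathList E u v q ∧ consistent E C B q := by
  induction h using Relation.ReflTransGen.head_induction_on with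
  | refl =>
    intro B hB
    refine ⟨[], ⟨[], List.isChain_singleton _, rfl, rfl⟩, ?_⟩
    change C (occupied B)
    rw [hB]
    exact hCT v hv
  | @head x y hxy _ ih =>
    obtain ⟨hE, hx, hy⟩ := hxy
    intro B hB
    obtain ⟨_, ⟨l, hl, hlast, rfl⟩, hcons⟩ :=
      ih (movePeb B (x, y)) (occupied_movePeb B hB (hTR x hx))
    have hyx : y ≠ x := by
      rintro rfl
      exact hirr y hE
    refine ⟨edgesOf (x :: y :: l), ⟨y :: l, List.isChain_cons_cons.mpr ⟨hE, hl⟩, ?_, rfl⟩,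
      ?_, ⟨hE, ?_, ?_⟩, hcons⟩
    · rw [List.getLast_cons (List.cons_ne_nil y l)]
      exact hlast
    · rw [hB]
      exact hCT x hx
    · rw [hB]
      exact Finset.mem_insert_self x R
    · rw [hB]
      simp [hyx, hTR y hy]

/-- With the other pebbles on `R ⊆ W ∖ {u, v}`, the moving pebble may stand on any vertex allowed
for a path realising the edge `(u, v)` of `G_W`. -/
theorem moving_pebble_admissible {V : Type*} [DecidableEq V] {C : Finset V → Prop}
    (hC : isASC C) {W R : Finset V} (hW : C W) {u v : V} (hu : u ∈ W) (hv : v ∈ W)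
    (hR : R ⊆ (W.erase u).erase v) {x : V}
    (hx : x ∈ ({u, v} : Set V) ∪ {x : V | x ∉ W ∧ C (insert x ((W.erase u).erase v))}) :
    x ∉ R ∧ C (insert x R) := by
  have hRW : R ⊆ W := fun z hz => Finset.mem_of_mem_erase (Finset.mem_of_mem_erase (hR hz))
  rcases hx with (rfl | rfl) | ⟨hxW, hxC⟩
  · exact ⟨fun h => by simpa using hR h, hC.2 _ _ hW (Finset.insert_subset hu hRW)⟩
  · exact ⟨fun h => by simpa using hR h, hC.2 _ _ hW (Finset.insert_subset hv hRW)⟩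
  · exact ⟨fun h => hxW (hRW h), hC.2 _ _ hxC (Finset.insert_subset_insert x hR)⟩

/-- Let `G = (V,E)` be a strongly connected digraph, `C` an ASC on `V`, `P` a finite
pebble set, and `W` independent on `(G,C)`. For every edge `(u,v)` of the reduced graph
`G_W` and every injective configuration `A` with `A(P) ⊆ W`, `u ∈ A(P)`, `v ∉ A(P)`,
there exists a directed path `p` in `G` from `u` to `v` (a lift of `(u,v)`) such that
for every prefix `s` of its edge sequence, `ρ(A, s)` is defined and its occupied set
belongs to `C`. -/
theorem stmt9 {V P : Type*} [Fintype V] [DecidableEq V] [Fintype P]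
    (E : V → V → Prop) (hirr : ∀ x, ¬ E x x)
    (hsc : ∀ u v : V, Relation.ReflTransGen E u v)
    (C : Finset V → Prop) (hC : isASC C)
    (W : Finset V) (hWind : independentOn E C W)
    (u v : V) (he : redEdge E C W u v)
    (A : P → V) (hinj : Function.Injective A) (hAW : occupied A ⊆ W)
    (hu : u ∈ occupied A) (hv : v ∉ occupied A) :
    ∃ q : List (V × V), isPathList E u v q ∧ consistent E C A q := by
  obtain ⟨huW, hvW, -, hpath⟩ := he
  have hCW : C W := by
    rcases hWind with rfl | h
    · simp at huW
    · exact h.1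
  have hR : (occupied A).erase u ⊆ (W.erase u).erase v := by
    intro z hz
    obtain ⟨hzu, hzA⟩ := Finset.mem_erase.mp hz
    have hzv : z ≠ v := by
      rintro rfl
      exact hv hzA
    exact Finset.mem_erase.mpr ⟨hzv, Finset.mem_erase.mpr ⟨hzu, hAW hzA⟩⟩
  exact exists_plan_of_pathIn hirr
    (fun x hx => (moving_pebble_admissible hC hCW huW hvW hR hx).1)
    (fun x hx => (moving_pebble_admissible hC hCW huW hvW hR hx).2)
    (by simp) hpath A (Finset.insert_erase hu).symm
end

section
/- Let G = (V,E) be a directed graph, C an abstract simplicial complex on V, P a finite set of pebbles, and W ⊆ V independent on (G,C). Let A^s, A^t be injective configurations with A^s(P) ⊆ W and A^t(P) ⊆ W. Suppose the plan p = e_1 ⋯ e_m, a sequence of edges of the reduced graph G_W, solves the MAPF instance <G_W, A^s, A^t>, i.e., ρ_W(A^s, p) is defined and ρ_W(A^s, p)(P) = A^t(P). Then the plan p̂ = P_1 ⋯ P_m, where each P_i is a lift of e_i with respect to the configuration reached after applying P_1 ⋯ P_{i−1}, solves the C-MAPF instance <G, A^s, A^t, C>: ρ(A^s, p̂) is defined,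 ρ(A^s, p̂)(P) = A^t(P), and (p̂, A^s) is consistent with C. -/
/-- `q` is a lift of the reduced-graph edge `e` with respect to configuration `A`:
`q` is the edge sequence of a directed path in `G` from `e.1` to `e.2`, the pair
`(q, A)` is consistent with `C`, and applying the whole lift yields the same set of
occupied vertices as the reduced transition `ρ_W(A, e)`. -/
def isLift {V P : Type*} [DecidableEq V] [Fintype P] (E : V → V → Prop)
    (C : Finset V → Prop) (A : P → V) (e : V × V) (q : List (V × V)) : Prop :=
  isPathList E e.1 e.2 q ∧ consistent E C A q ∧
    occupied (execPlan A q) = occupied (movePeb A e)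

/-- `liftedPlan E C A p f` : the plan `f` is the concatenation `P_1 ⋯ P_m`, where each
`P_i` is a lift of the `i`-th edge `e_i` of `p` with respect to the configuration
reached after applying `P_1 ⋯ P_{i-1}`. -/
def liftedPlan {V P : Type*} [DecidableEq V] [Fintype P] (E : V → V → Prop)
    (C : Finset V → Prop) : (P → V) → List (V × V) → List (V × V) → Prop
  | _, [], f => f = []
  | A, e :: p, f => ∃ q f', f = q ++ f' ∧ isLift E C A e q ∧
      liftedPlan E C (execPlan A q) p f'

theorem occupied_movePeb_s10 {V P : Type*} [DecidableEq V] [Fintype P] (A : P → V) (e : V × V) :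
    occupied (movePeb A e) = (occupied A).image (fun x => if x = e.1 then e.2 else x) := by
  simp only [occupied, Finset.image_image]
  rfl

theorem execPlan_append {V P : Type*} [DecidableEq V] (A : P → V) (q f : List (V × V)) :
    execPlan A (q ++ f) = execPlan (execPlan A q) f := by
  induction q generalizing A with
  | nil => rfl
  | cons e q ih => exact ih _

theorem consistent_append {V P : Type*} [DecidableEq V] [Fintype P] {E : V → V → Prop}
    {C : Finset V → Prop} {A : P → V} {q f : List (V × V)} (hq : consistent E C A q)
    (hf : consistent E C (execPlan A q) f) : consistent E C A (q ++ f) := by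
  induction q generalizing A with
  | nil => exact hf
  | cons e q ih => exact ⟨hq.1, hq.2.1, ih hq.2.2 hf⟩

theorem consistent_final {V P : Type*} [DecidableEq V] [Fintype P] {E : V → V → Prop}
    {C : Finset V → Prop} {A : P → V} {q : List (V × V)} (hq : consistent E C A q) :
    C (occupied (execPlan A q)) := by
  induction q generalizing A with
  | nil => exact hq
  | cons e q ih => exact ih hq.2.2

/-- The induction along the reduced plan `p`. The configuration `A` of the lifted execution and
the configuration `B` of the reduced execution may put different pebbles on
the same vertex, so the hypothesis relates their occupied sets alone. -/
theorem liftedPlan_spec {V P : Type*} [DecidableEq V] [Fintype P] {E : V → V → Prop}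
    {C : Finset V → Prop} (p : List (V × V)) {A B : P → V} {f : List (V × V)}
    (hA : C (occupied A)) (hAB : occupied A = occupied B) (hf : liftedPlan E C A p f) :
    consistent E C A f ∧ occupied (execPlan A f) = occupied (execPlan B p) := by
  induction p generalizing A B f with
  | nil =>
    obtain rfl : f = [] := hf
    exact ⟨hA, hAB⟩
  | cons e p ih =>
    obtain ⟨q, f', rfl, ⟨-, hq, hocc⟩, hf'⟩ := hf
    have hstep : occupied (execPlan A q) = occupied (movePeb B e) := by
      rw [hocc, occupied_movePeb_s10, occupied_movePeb_s10, hAB]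
    obtain ⟨h1, h2⟩ := ih (consistent_final hq) hstep hf'
    exact ⟨consistent_append hq h1, by rw [execPlan_append]; exact h2⟩

/-- Let `G = (V,E)` be a digraph, `C` an ASC on `V`, `P` a finite pebble set, and `W`
independent on `(G,C)`. Let `A^s, A^t` be injective configurations with
`A^s(P), A^t(P) ⊆ W`. If the plan `p` of edges of the reduced graph `G_W` solves the
MAPF instance `⟨G_W, A^s, A^t⟩` (i.e. `ρ_W(A^s, p)` is defined and its occupied set is
`A^t(P)`), then any plan `f` obtained by concatenating lifts of the edges of `p`
solves the `C`-MAPF instance `⟨G, A^s, A^t, C⟩`: `(f, A^s)` is consistent with `C`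
and the occupied set of `ρ(A^s, f)` is `A^t(P)`. -/
theorem stmt10 {V P : Type*} [Fintype V] [DecidableEq V] [Fintype P]
    (E : V → V → Prop) (hirr : ∀ x, ¬ E x x)
    (C : Finset V → Prop) (hC : isASC C)
    (W : Finset V) (hWind : independentOn E C W)
    (As At : P → V) (hs : Function.Injective As) (ht : Function.Injective At)
    (hsW : occupied As ⊆ W) (htW : occupied At ⊆ W)
    (p f : List (V × V))
    (hp1 : planOK (redEdge E C W) As p)
    (hp2 : occupied (execPlan As p) = occupied At)
    (hf : liftedPlan E C As p f) :
    consistent E C As f ∧ occupied (execPlan As f) = occupied At := by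
  have hAs : C (occupied As) := by
    rcases hWind with rfl | ⟨hW, -⟩
    · exact hC.2 _ _ hC.1 hsW
    · exact hC.2 _ _ hW hsW
  obtain ⟨h1, h2⟩ := liftedPlan_spec p hAs rfl hf
  exact ⟨h1, h2.trans hp2⟩
end

section
/- Let G = (V,E) be a directed graph, C an abstract simplicial complex on V, P a finite set of pebbles, and let A^s, A^t be injective configurations with A^s(P) ∪ A^t(P) ∈ F_G^C. Then for every W ∈ F_G^C with A^s(P) ∪ A^t(P) ⊆ W: if the MAPF instance <G_W, A^s, A^t> is feasible (some plan on G_W takes A^s to a configuration with occupied set A^t(P)), then the C-MAPF instance <G, A^s, A^t, C> is feasible (some plan f on G satisfies ρ(A^s,f)(P) = A^t(P) and (f, A^s) is consistent with C). -/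
/-- `B` is the configuration obtained from `A` by executing some plan on `(V, E)` that is
consistent with `C`. -/
def Reach {V P : Type*} [DecidableEq V] [Fintype P] (E : V → V → Prop)
    (C : Finset V → Prop) (A B : P → V) : Prop :=
  ∃ f : List (V × V), consistent E C A f ∧ execPlan A f = B

lemma movePeb_self {V P : Type*} [DecidableEq V] (A : P → V) (u : V) : movePeb A (u, u) = A := by
  funext q
  simp only [movePeb]
  split_ifs with h
  · exact h.symm
  · rfl

section

variable {V P : Type*} [DecidableEq V] [Fintype P] {E : V → V → Prop} {C : Finset V → Prop}

lemma Reach.trans {A B D : P → V} (h₁ : Reach E C A B) (h₂ : Reach E C B D) :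
    Reach E C A D := by
  obtain ⟨f, hf, rfl⟩ := h₁
  obtain ⟨g, hg, rfl⟩ := h₂
  induction f generalizing A with
  | nil => exact ⟨g, hg, rfl⟩
  | cons e f ih =>
    obtain ⟨k, hk, hkB⟩ := ih hf.2.2 hg
    exact ⟨e :: k, ⟨hf.1, hf.2.1, hk⟩, hkB⟩

lemma mem_occupied {A : P → V} {x : V} : x ∈ occupied A ↔ ∃ q, A q = x := by
  simp [occupied]

lemma mem_occupied_movePeb {A : P → V} {u v x : V} (hx : x ∈ occupied (movePeb A (u, v))) :
    x = v ∨ x ∈ occupied A ∧ x ≠ u := by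
  obtain ⟨q, rfl⟩ := mem_occupied.1 hx
  by_cases h : A q = u
  · simp [movePeb, h]
  · simp [movePeb, h, mem_occupied]

/-- Two successive moves of the same pebble amount to a single move, provided the intermediate
vertex `a` held no pebble other than the one moved. -/
lemma movePeb_movePeb {A : P → V} {u a b : V} (ha : a ∈ occupied A → a = u) :
    movePeb (movePeb A (u, a)) (a, b) = movePeb A (u, b) := by
  funext q
  by_cases h : A q = u
  · simp [movePeb, h]
  · have h' : A q ≠ a := fun e => h (e.trans (ha (mem_occupied.2 ⟨q, e⟩)))
    simp [movePeb, h, h']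

/-- A single move along an edge of the reduced graph is realised by a consistent plan on `G`. -/
lemma reach_of_redEdge (hirr : ∀ x, ¬ E x x) (hC : isASC C) {W : Finset V} (hW : C W)
    {A : P → V} (hA : occupied A ⊆ W) {v1 v2 : V} (h : stepOK (redEdge E C W) A (v1, v2)) :
    Reach E C A (movePeb A (v1, v2)) := by
  obtain ⟨⟨h1, h2, -, hp⟩, hv1, hv2⟩ := h
  simp only at h1 h2 hp hv1 hv2
  set T : Set V := ({v1, v2} : Set V) ∪ {x : V | x ∉ W ∧ C (insert x ((W.erase v1).erase v2))}
    with hT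
  have hocc : ∀ a ∈ T, a ∈ occupied A → a = v1 := by
    rintro a ((rfl | rfl) | ⟨ha, -⟩) hao
    · rfl
    · exact absurd hao hv2
    · exact absurd (hA hao) ha
  have hCa : ∀ a ∈ T, C (occupied (movePeb A (v1, a))) := by
    rintro a ((rfl | rfl) | ⟨-, haC⟩)
    · rw [movePeb_self]
      exact hC.2 _ _ hW hA
    · refine hC.2 _ _ hW fun x hx => ?_
      rcases mem_occupied_movePeb hx with rfl | ⟨hx, -⟩
      · exact h2
      · exact hA hx
    · refine hC.2 _ _ haC fun x hx => ?_
      rcases mem_occupied_movePeb hx with rfl | ⟨hx, hne⟩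
      · exact Finset.mem_insert_self _ _
      · exact Finset.mem_insert_of_mem (Finset.mem_erase.2
          ⟨fun e => hv2 (e ▸ hx), Finset.mem_erase.2 ⟨hne, hA hx⟩⟩)
  have key : ∀ a, pathIn E T v1 a → Reach E C A (movePeb A (v1, a)) := by
    intro a ha
    induction ha with
    | refl =>
      rw [movePeb_self]
      exact ⟨[], hC.2 _ _ hW hA, rfl⟩
    | @tail a b _ hab ih =>
      obtain ⟨hE, ha, hb⟩ := hab
      have hmove := movePeb_movePeb (b := b) (hocc a ha)
      refine ih.trans ⟨[(a, b)], ⟨hCa a ha, ⟨hE, ?_, ?_⟩, ?_⟩, hmove⟩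
      · obtain ⟨q, hq⟩ := mem_occupied.1 hv1
        exact mem_occupied.2 ⟨q, by simp [movePeb, hq]⟩
      · intro hbo
        rcases mem_occupied_movePeb hbo with hba | ⟨hbo, hne⟩
        · exact hirr a (by simpa [show b = a from hba] using hE)
        · exact hne (hocc b hb hbo)
      · change C (occupied (movePeb (movePeb A (v1, a)) (a, b)))
        rw [hmove]
        exact hCa b hb
  exact key v2 hp

lemma reach_of_plan (hirr : ∀ x, ¬ E x x) (hC : isASC C) {W : Finset V} (hW : C W)
    (p : List (V × V)) {A : P → V} (hA : occupied A ⊆ W) (hp : planOK (redEdge E C W) A p) :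
    Reach E C A (execPlan A p) := by
  induction p generalizing A with
  | nil => exact ⟨[], hC.2 _ _ hW hA, rfl⟩
  | cons e p ih =>
    obtain ⟨he, hp⟩ := hp
    refine (reach_of_redEdge hirr hC hW hA he).trans (ih (fun x hx => ?_) hp)
    rcases mem_occupied_movePeb hx with rfl | ⟨hx, -⟩
    · exact he.1.2.1
    · exact hA hx

end

/-- Let `G = (V,E)` be a digraph, `C` an ASC on `V`, `P` a finite pebble set, and
`A^s, A^t` injective configurations with `A^s(P) ∪ A^t(P)` independent on `(G,C)`.
Then for every independent `W` containing `A^s(P) ∪ A^t(P)`: if the MAPF instance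
`⟨G_W, A^s, A^t⟩` is feasible, then the `C`-MAPF instance `⟨G, A^s, A^t, C⟩` is
feasible. -/
theorem stmt11 {V P : Type*} [Fintype V] [DecidableEq V] [Fintype P]
    (E : V → V → Prop) (hirr : ∀ x, ¬ E x x)
    (C : Finset V → Prop) (hC : isASC C)
    (As At : P → V) (hs : Function.Injective As) (ht : Function.Injective At)
    (hind : independentOn E C (occupied As ∪ occupied At)) :
    ∀ W : Finset V, independentOn E C W → occupied As ∪ occupied At ⊆ W →
      (∃ p : List (V × V), planOK (redEdge E C W) As p ∧
        occupied (execPlan As p) = occupied At) →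
      ∃ f : List (V × V), consistent E C As f ∧
        occupied (execPlan As f) = occupied At := by
  rintro W hW hsub ⟨p, hp, hpt⟩
  have hCW : C W := by
    rcases hW with rfl | hW
    · exact hC.1
    · exact hW.1
  obtain ⟨f, hf, hfe⟩ :=
    reach_of_plan hirr hC hCW p (Finset.union_subset_left hsub) hp
  exact ⟨f, hf, by rw [hfe, hpt]⟩
end

section
/- Let G = (V,E) be a directed graph, C an abstract simplicial complex on V, P a finite set of pebbles, and let A^s, A^t be injective configurations with A^s(P) ∈ F_G^C and A^t(P) ∈ F_G^C. Then for all W_1, W_2 ∈ F_G^C and every injective configuration A^i with A^i(P) ⊆ W_1 ∩ W_2, A^s(P) ⊆ W_1, A^t(P) ⊆ W_2: if both MAPF instances <G_{W_1}, A^s, A^i> and <G_{W_2}, A^i, A^t> are feasible, then the C-MAPF instance <G, A^s, A^t, C> is feasible. -/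
/-- The occupied set `S'` arises from `S` by moving one pebble along an edge of `E` to an
unoccupied vertex. -/
def pebMove {V : Type*} [DecidableEq V] (E : V → V → Prop) (S S' : Finset V) : Prop :=
  ∃ u v, E u v ∧ u ∈ S ∧ v ∉ S ∧ S' = insert v (S.erase u)

lemma occupied_movePeb_s12 {V P : Type*} [DecidableEq V] [Fintype P] (A : P → V) (u v : V)
    (hu : u ∈ occupied A) :
    occupied (movePeb A (u, v)) = insert v ((occupied A).erase u) := by
  ext x
  simp only [occupied, movePeb, Finset.mem_image, Finset.mem_univ, true_and, Finset.mem_insert,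
    Finset.mem_erase] at hu ⊢
  obtain ⟨q, hq⟩ := hu
  constructor
  · rintro ⟨r, hr⟩
    split_ifs at hr with h
    · exact Or.inl hr.symm
    · exact Or.inr ⟨hr ▸ h, r, hr⟩
  · rintro (rfl | ⟨hx, r, hr⟩)
    · exact ⟨q, by simp [hq]⟩
    · exact ⟨r, by rw [if_neg (hr ▸ hx), hr]⟩

lemma moves_of_planOK {V P : Type*} [DecidableEq V] [Fintype P] {E : V → V → Prop}
    (p : List (V × V)) : ∀ A : P → V, planOK E A p →
      Relation.ReflTransGen (pebMove E) (occupied A) (occupied (execPlan A p)) := by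
  induction p with
  | nil => exact fun A _ => .refl
  | cons e p ih =>
    rintro A ⟨⟨he, hu, hv⟩, hp⟩
    exact .head ⟨e.1, e.2, he, hu, hv, occupied_movePeb_s12 A e.1 e.2 hu⟩ (ih _ hp)

/-- A sequence of moves through sets in `C` lifts to a consistent plan, starting from any
configuration that occupies the first set. -/
lemma exists_consistent {V P : Type*} [DecidableEq V] [Fintype P] {E : V → V → Prop}
    {C : Finset V → Prop} {S T : Finset V}
    (h : Relation.ReflTransGen (fun S S' => pebMove E S S' ∧ C S') S T) (hS : C S) :
    ∀ A : P → V, occupied A = S →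
      ∃ f : List (V × V), consistent E C A f ∧ occupied (execPlan A f) = T := by
  induction h using Relation.ReflTransGen.head_induction_on with
  | refl =>
    rintro A rfl
    exact ⟨[], hS, rfl⟩
  | head h _ ih =>
    rintro A rfl
    obtain ⟨⟨u, v, he, hu, hv, rfl⟩, hC'⟩ := h
    obtain ⟨f, hf, hfT⟩ := ih hC' (movePeb A (u, v)) (occupied_movePeb_s12 A u v hu)
    exact ⟨(u, v) :: f, ⟨hS, ⟨he, hu, hv⟩, hf⟩, hfT⟩

/-- A move in the reduced graph `G_W` is realised in `G` by walking the pebble along the path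
that witnesses the reduced edge, with all intermediate occupied sets in `C`. -/
lemma pebMove_simulate {V : Type*} [DecidableEq V] {E : V → V → Prop} (hirr : ∀ x, ¬ E x x)
    {C : Finset V → Prop} (hC : isASC C) {W S S' : Finset V} (hW : C W) (hS : S ⊆ W)
    (h : pebMove (redEdge E C W) S S') :
    S' ⊆ W ∧ Relation.ReflTransGen (fun S S' => pebMove E S S' ∧ C S') S S' := by
  obtain ⟨u, v, ⟨huW, hvW, -, hpath⟩, hu, hv, rfl⟩ := h
  refine ⟨Finset.insert_subset hvW ((Finset.erase_subset _ _).trans hS), ?_⟩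
  set T : Set V := ({u, v} : Set V) ∪ {x : V | x ∉ W ∧ C (insert x ((W.erase u).erase v))}
    with hT
  have hfree : ∀ x ∈ T, x ∉ S.erase u := by
    rintro x ((rfl | rfl) | ⟨hx, -⟩) hxS
    · simp at hxS
    · exact hv (Finset.mem_of_mem_erase hxS)
    · exact hx (hS (Finset.mem_of_mem_erase hxS))
  have hSW : S.erase u ⊆ (W.erase u).erase v := fun y hy =>
    Finset.mem_erase.2 ⟨fun hyv => hv (hyv ▸ Finset.mem_of_mem_erase hy),
      Finset.erase_subset_erase u hS hy⟩
  have hadm : ∀ x ∈ T, C (insert x (S.erase u)) := by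
    have hsub := (Finset.erase_subset u S).trans hS
    rintro x ((rfl | rfl) | ⟨-, hx⟩)
    · exact hC.2 _ _ hW (Finset.insert_subset huW hsub)
    · exact hC.2 _ _ hW (Finset.insert_subset hvW hsub)
    · exact hC.2 _ _ hx (Finset.insert_subset_insert x hSW)
  have hwalk : ∀ x, pathIn E T u x →
      Relation.ReflTransGen (fun S S' => pebMove E S S' ∧ C S') S (insert x (S.erase u)) := by
    intro x hx
    induction hx with
    | refl => rw [Finset.insert_erase hu]
    | @tail b c _ hbc ih =>
      obtain ⟨hE, hb, hc⟩ := hbc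
      refine ih.tail ⟨⟨b, c, hE, Finset.mem_insert_self _ _, ?_, ?_⟩, hadm c hc⟩
      · rw [Finset.mem_insert]
        rintro (rfl | hcS)
        · exact hirr _ hE
        · exact hfree c hc hcS
      · rw [Finset.erase_insert (hfree b hb)]
  exact hwalk v hpath

lemma moves_simulate {V : Type*} [DecidableEq V] {E : V → V → Prop} (hirr : ∀ x, ¬ E x x)
    {C : Finset V → Prop} (hC : isASC C) {W S S' : Finset V} (hW : C W) (hS : S ⊆ W)
    (h : Relation.ReflTransGen (pebMove (redEdge E C W)) S S') :
    S' ⊆ W ∧ Relation.ReflTransGen (fun S S' => pebMove E S S' ∧ C S') S S' := by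
  induction h with
  | refl => exact ⟨hS, .refl⟩
  | tail _ hbc ih =>
    obtain ⟨hsub, hrest⟩ := pebMove_simulate hirr hC hW ih.1 hbc
    exact ⟨hsub, ih.2.trans hrest⟩

lemma independentOn.mem {V : Type*} [DecidableEq V] {E : V → V → Prop}
    {C : Finset V → Prop} (hC : isASC C) {W : Finset V} (h : independentOn E C W) : C W := by
  rcases h with rfl | h
  exacts [hC.1, h.1]

/-- Let `G = (V,E)` be a digraph, `C` an ASC on `V`, `P` a finite pebble set, and
`A^s, A^t` injective configurations with `A^s(P)` and `A^t(P)` independent on `(G,C)`.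
Then for all independent sets `W₁, W₂` with `A^s(P) ⊆ W₁`, `A^t(P) ⊆ W₂` and every
injective intermediate configuration `A^i` with `A^i(P) ⊆ W₁ ∩ W₂`: if both MAPF
instances `⟨G_{W₁}, A^s, A^i⟩` and `⟨G_{W₂}, A^i, A^t⟩` are feasible, then the
`C`-MAPF instance `⟨G, A^s, A^t, C⟩` is feasible. -/
theorem stmt12 {V P : Type*} [Fintype V] [DecidableEq V] [Fintype P]
    (E : V → V → Prop) (hirr : ∀ x, ¬ E x x)
    (C : Finset V → Prop) (hC : isASC C)
    (As At : P → V) (hs : Function.Injective As) (ht : Function.Injective At)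
    (hinds : independentOn E C (occupied As)) (hindt : independentOn E C (occupied At)) :
    ∀ W₁ W₂ : Finset V, independentOn E C W₁ → independentOn E C W₂ →
      occupied As ⊆ W₁ → occupied At ⊆ W₂ →
      ∀ Ai : P → V, Function.Injective Ai → occupied Ai ⊆ W₁ ∩ W₂ →
      (∃ p : List (V × V), planOK (redEdge E C W₁) As p ∧
        occupied (execPlan As p) = occupied Ai) →
      (∃ p : List (V × V), planOK (redEdge E C W₂) Ai p ∧
        occupied (execPlan Ai p) = occupied At) →
      ∃ f : List (V × V), consistent E C As f ∧
        occupied (execPlan As f) = occupied At := by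
  rintro W₁ W₂ hW₁ hW₂ hs₁ - Ai - hAi ⟨p, hp, hpe⟩ ⟨q, hq, hqe⟩
  have h₁ := moves_of_planOK p As hp
  have h₂ := moves_of_planOK q Ai hq
  rw [hpe] at h₁
  rw [hqe] at h₂
  have hi₂ : occupied Ai ⊆ W₂ := hAi.trans Finset.inter_subset_right
  obtain ⟨-, g₁⟩ := moves_simulate hirr hC (hW₁.mem hC) hs₁ h₁
  obtain ⟨-, g₂⟩ := moves_simulate hirr hC (hW₂.mem hC) hi₂ h₂
  exact exists_consistent (g₁.trans g₂) (hinds.mem hC) As rfl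
end

section
/- Correctness of the MIS reduction: let G = (V,E) be a finite undirected graph (a symmetric irreflexive digraph) and k ∈ ℕ. Let G' = (V ∪ {q}, E ∪ {(i,q),(q,i) : i ∈ V}) for a new vertex q ∉ V. Define the constraint set C on V ∪ {q} by: U ∈ C iff |U ∩ {i,j}| ≤ 1 for every edge (i,j) ∈ E, and |U ∩ V| + 2·(1 if q ∈ U else 0) ≤ k. Then G has an independent set (in the classical sense: no two adjacent vertices) of cardinality k if and only if there exists a subset of V ∪ {q} of cardinality k that is independent on (G', C). -/
/-- The edge relation of the augmented graph `G'`: the edges of `G` together with the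
edges `(i, q)` and `(q, i)` joining every vertex `i` of `G` to the new vertex `q`
(encoded as `Sum.inr ()`). -/
def extE {V : Type*} (E : V → V → Prop) : (V ⊕ Unit) → (V ⊕ Unit) → Prop
  | Sum.inl i, Sum.inl j => E i j
  | Sum.inl _, Sum.inr _ => True
  | Sum.inr _, Sum.inl _ => True
  | Sum.inr _, Sum.inr _ => False

/-- The weight used in the cardinality constraint: `1` on vertices of `G`, `2` on the
new vertex `q`. -/
def misWeight {V : Type*} : V ⊕ Unit → ℕ
  | Sum.inl _ => 1
  | Sum.inr _ => 2

/-- The constraint set of the MIS reduction: `U ∈ C` iff `|U ∩ {i,j}| ≤ 1` for every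
edge `(i,j)` of `G`, and `|U ∩ V| + 2·[q ∈ U] ≤ k`. -/
def misC {V : Type*} [DecidableEq V] (E : V → V → Prop) (k : ℕ)
    (U : Finset (V ⊕ Unit)) : Prop :=
  (∀ i j : V, E i j → (({Sum.inl i, Sum.inl j} : Finset (V ⊕ Unit)) ∩ U).card ≤ 1) ∧
  (∑ x ∈ U, misWeight x) ≤ k


/-- In a loopless graph, `|U ∩ {i,j}| ≤ 1` says that `U` does not contain both ends of the edge. -/
theorem misC_iff {V : Type*} [DecidableEq V] {E : V → V → Prop} (hirr : ∀ i, ¬ E i i) (k : ℕ)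
    (U : Finset (V ⊕ Unit)) :
    misC E k U ↔ (∀ i j : V, E i j → Sum.inl i ∈ U → Sum.inl j ∉ U) ∧
      (∑ x ∈ U, misWeight x) ≤ k := by
  unfold misC
  refine and_congr_left fun _ => forall₂_congr fun i j => imp_congr_right fun hE => ?_
  have hij : i ≠ j := fun h => hirr j (h ▸ hE)
  rw [Finset.card_le_one]
  constructor
  · intro h hi hj
    exact hij (Sum.inl.inj (h (Sum.inl i) (by simp [hi]) (Sum.inl j) (by simp [hj])))
  · intro h a ha b hb
    simp only [Finset.mem_inter, Finset.mem_insert, Finset.mem_singleton] at ha hb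
    obtain ⟨rfl | rfl, ha⟩ := ha <;> obtain ⟨rfl | rfl, hb⟩ := hb
    · rfl
    · exact absurd hb (h ha)
    · exact absurd ha (h hb)
    · rfl

theorem sum_misWeight_of_not_mem {V : Type*} {U : Finset (V ⊕ Unit)} (hq : Sum.inr () ∉ U) :
    ∑ x ∈ U, misWeight x = U.card := by
  rw [Finset.card_eq_sum_ones]
  refine Finset.sum_congr rfl fun x hx => ?_
  rcases x with x | ⟨⟩
  · rfl
  · exact absurd hx hq

theorem not_mem_of_sum_misWeight_le {V : Type*} {U : Finset (V ⊕ Unit)}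
    (h : ∑ x ∈ U, misWeight x ≤ U.card) : Sum.inr () ∉ U := by
  intro hq
  refine absurd h (not_le.mpr ?_)
  rw [Finset.card_eq_sum_ones]
  refine Finset.sum_lt_sum (fun x _ => ?_) ⟨_, hq, by simp [misWeight]⟩
  rcases x with x | x <;> simp [misWeight]

/-- On a feasible set `W` of size `k` avoiding `q`, the reduced graph is complete. -/
theorem redEdge_of_ne {V : Type*} [DecidableEq V] {E : V → V → Prop} (hirr : ∀ i, ¬ E i i)
    {W : Finset (V ⊕ Unit)} (hq : Sum.inr () ∉ W) (hC : misC E W.card W)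
    {u v : V ⊕ Unit} (hu : u ∈ W) (hv : v ∈ W) (huv : u ≠ v) :
    redEdge (extE E) (misC E W.card) W u v := by
  have hq' : Sum.inr () ∉ (W.erase u).erase v := fun h =>
    hq (Finset.mem_of_mem_erase (Finset.mem_of_mem_erase h))
  have hvu : v ∈ W.erase u := Finset.mem_erase.mpr ⟨huv.symm, hv⟩
  have hqC : misC E W.card (insert (Sum.inr ()) ((W.erase u).erase v)) := by
    rw [misC_iff hirr] at hC ⊢
    constructor
    · intro i j hE hi hj
      simp only [Finset.mem_insert, reduceCtorEq, Finset.mem_erase, false_or] at hi hj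
      exact hC.1 i j hE hi.2.2 hj.2.2
    · rw [Finset.sum_insert hq', sum_misWeight_of_not_mem hq']
      have h1 := Finset.card_erase_add_one hvu
      have h2 := Finset.card_erase_add_one hu
      simp only [misWeight]
      omega
  refine ⟨hu, hv, huv, ?_⟩
  refine Relation.ReflTransGen.tail (b := Sum.inr ()) (Relation.ReflTransGen.single ?_) ?_
  · refine ⟨?_, Or.inl (Or.inl rfl), Or.inr ⟨hq, hqC⟩⟩
    rcases u with u | ⟨⟩
    · trivial
    · exact hq hu
  · refine ⟨?_, Or.inr ⟨hq, hqC⟩, Or.inl (Or.inr rfl)⟩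
    rcases v with v | ⟨⟩
    · trivial
    · exact hq hv

/-- Correctness of the MIS reduction: a finite undirected graph `G = (V,E)` (a
symmetric irreflexive digraph) has a classical independent set of cardinality `k`
iff there is a subset of `V ∪ {q}` of cardinality `k` that is independent on
`(G', C)`, where `G'` adds the universal vertex `q` and `C` is the constraint set
above. -/
theorem stmt15 {V : Type*} [Fintype V] [DecidableEq V] (E : V → V → Prop)
    (hsymm : ∀ i j, E i j → E j i) (hirr : ∀ i, ¬ E i i) (k : ℕ) :
    (∃ U : Finset V, U.card = k ∧ ∀ i ∈ U, ∀ j ∈ U, i ≠ j → ¬ E i j) ↔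
    (∃ U' : Finset (V ⊕ Unit), U'.card = k ∧ independentOn (extE E) (misC E k) U') := by
  constructor
  · rintro ⟨U, rfl, hU⟩
    have hq : Sum.inr () ∉ U.map (Function.Embedding.inl : V ↪ V ⊕ Unit) := by simp
    have hcard : (U.map (Function.Embedding.inl : V ↪ V ⊕ Unit)).card = U.card :=
      Finset.card_map _
    have hC : misC E (U.map (Function.Embedding.inl : V ↪ V ⊕ Unit)).card
        (U.map Function.Embedding.inl) := by
      rw [misC_iff hirr]
      refine ⟨fun i j hE hi hj => ?_, (sum_misWeight_of_not_mem hq).le⟩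
      have hi' : i ∈ U := by simpa using hi
      have hj' : j ∈ U := by simpa using hj
      exact hU i hi' j hj' (fun h => hirr j (h ▸ hE)) hE
    refine ⟨U.map Function.Embedding.inl, hcard, Or.inr ?_⟩
    rw [← hcard]
    refine ⟨hC, fun u hu v hv => ?_⟩
    by_cases huv : u = v
    · rw [huv]
    · exact Relation.ReflTransGen.single (redEdge_of_ne hirr hq hC hu hv huv)
  · rintro ⟨U', rfl, rfl | ⟨hC, -⟩⟩
    · exact ⟨∅, by simp, by simp⟩
    · rw [misC_iff hirr] at hC
      have hq := not_mem_of_sum_misWeight_le hC.2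
      refine ⟨U'.toLeft, ?_, fun i hi j hj _ hE =>
        hC.1 i j hE (Finset.mem_toLeft.mp hi) (Finset.mem_toLeft.mp hj)⟩
      have hR : U'.toRight = ∅ := by
        ext ⟨⟩
        simp [hq]
      have h := Finset.card_toLeft_add_card_toRight (u := U')
      simpa [hR] using h
end
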